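/- arXiv:1801.00120 — 2 statements merged into one kernel-verified Lean document; each statement's English description precedes it below -/
import Mathlib

section
/- Let H ∈ (0,1) and let n ≥ 1 be an integer. Then ∫₀¹ ∫₀¹ t^{n−1} s^{n−1} |t−s|^{2H} ds dt = (1/(n+H)) · (Γ(2H+1)Γ(n)/Γ(n+2H+1)). -/
/-!
Up to the null diagonal, the square `(0, T]²` is the union of the triangle `s < t` and its mirror
image, and the reflection exchanges the exponents of `t` and `s`. On the triangle, the substitution
`s = t u` turns the inner integral into a Beta integral times a power of `t`. The integrand being
nonnegative, the same computation also gives the integrability that Fubini's theorem requires.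
-/

open MeasureTheory Set ProbabilityTheory

section SetIntegralProd

variable {α β E : Type*} [MeasurableSpace α] [MeasurableSpace β] [NormedAddCommGroup E]
  {μ : Measure α} {ν : Measure β} [SFinite ν] {S : Set (α × β)} {f : α × β → E}

lemma integrableOn_prod_iff (hS : MeasurableSet S)
    (hf : AEStronglyMeasurable f ((μ.prod ν).restrict S)) :
    IntegrableOn f S (μ.prod ν) ↔
      (∀ᵐ x ∂μ, IntegrableOn (fun y ↦ f (x, y)) (Prod.mk x ⁻¹' S) ν) ∧
        Integrable (fun x ↦ ∫ y in Prod.mk x ⁻¹' S, ‖f (x, y)‖ ∂ν) μ := by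
  have hsec (x : α) : MeasurableSet (Prod.mk x ⁻¹' S) := measurable_prodMk_left hS
  rw [← integrable_indicator_iff hS,
    integrable_prod_iff ((aestronglyMeasurable_indicator_iff hS).2 hf)]
  simp only [← integrable_indicator_iff (hsec _), ← integral_indicator (hsec _),
    norm_indicator_eq_indicator_norm]
  rfl

lemma setIntegral_prod_eq_integral_preimage [NormedSpace ℝ E] [SFinite μ] (hS : MeasurableSet S)
    (hf : IntegrableOn f S (μ.prod ν)) :
    ∫ z in S, f z ∂μ.prod ν = ∫ x, ∫ y in Prod.mk x ⁻¹' S, f (x, y) ∂ν ∂μ := by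
  have hsec (x : α) : MeasurableSet (Prod.mk x ⁻¹' S) := measurable_prodMk_left hS
  rw [← integral_indicator hS, integral_prod _ ((integrable_indicator_iff hS).2 hf)]
  simp only [← integral_indicator (hsec _)]
  rfl

lemma integrableOn_preimage_swap_iff [SFinite μ] {S : Set (β × α)} :
    IntegrableOn f (Prod.swap ⁻¹' S) (μ.prod ν) ↔ IntegrableOn (f ∘ Prod.swap) S (ν.prod μ) :=
  Measure.measurePreserving_swap.integrableOn_comp_preimage
    MeasurableEquiv.prodComm.measurableEmbedding (f := f ∘ Prod.swap)

lemma setIntegral_preimage_swap [NormedSpace ℝ E] [SFinite μ] (S : Set (β × α)) :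
    ∫ z in Prod.swap ⁻¹' S, f z ∂μ.prod ν = ∫ z in S, (f ∘ Prod.swap) z ∂ν.prod μ :=
  Measure.measurePreserving_swap.setIntegral_preimage_emb
    MeasurableEquiv.prodComm.measurableEmbedding (f ∘ Prod.swap) S

end SetIntegralProd

lemma measure_prod_diagonal {α : Type*} [MeasurableSpace α] [MeasurableEq α] (μ ν : Measure α)
    [SFinite ν] [NullSingletonClass ν] : μ.prod ν (diagonal α) = 0 := by
  rw [Measure.measure_prod_null measurableSet_diagonal]
  refine .of_forall fun x ↦ ?_
  have hsec : Prod.mk x ⁻¹' diagonal α = {x} := by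
    ext y
    simp [eq_comm]
  simp [hsec]

/-- The part of the square `(c, d]²` strictly below the diagonal, half of the domain of integration
in a double integral over the square; the first coordinate is the larger one. -/
def lowerTriangle (c d : ℝ) : Set (ℝ × ℝ) :=
  {z | c < z.2 ∧ z.2 < z.1 ∧ z.1 ≤ d}

section LowerTriangle

variable {E : Type*} [NormedAddCommGroup E] {c d : ℝ} {f : ℝ × ℝ → E}

lemma measurableSet_lowerTriangle (c d : ℝ) : MeasurableSet (lowerTriangle c d) := by
  unfold lowerTriangle
  measurability

lemma prodMk_preimage_lowerTriangle_of_mem {x : ℝ} (hx : x ∈ Ioc c d) :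
    Prod.mk x ⁻¹' lowerTriangle c d = Ioo c x := by
  ext y
  simp [lowerTriangle, hx.2]

lemma prodMk_preimage_lowerTriangle_of_notMem {x : ℝ} (hx : x ∉ Ioc c d) :
    Prod.mk x ⁻¹' lowerTriangle c d = ∅ := by
  ext y
  simp only [lowerTriangle, mem_preimage, mem_ofPred_eq, mem_empty_iff_false, iff_false]
  exact fun ⟨hcy, hyx, hxd⟩ ↦ hx ⟨hcy.trans hyx, hxd⟩

lemma setIntegral_prodMk_preimage_lowerTriangle [NormedSpace ℝ E] (g : ℝ → ℝ → E) :
    (fun x ↦ ∫ y in Prod.mk x ⁻¹' lowerTriangle c d, g x y) =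
      (Ioc c d).indicator fun x ↦ ∫ y in c..x, g x y := by
  ext x
  by_cases hx : x ∈ Ioc c d
  · rw [prodMk_preimage_lowerTriangle_of_mem hx, indicator_of_mem hx,
      intervalIntegral.integral_of_le hx.1.le, integral_Ioc_eq_integral_Ioo]
  · rw [prodMk_preimage_lowerTriangle_of_notMem hx, indicator_of_notMem hx, setIntegral_empty]

lemma integrableOn_lowerTriangle (hf : AEStronglyMeasurable f (volume.restrict (lowerTriangle c d)))
    (hinner : ∀ x ∈ Ioc c d, IntervalIntegrable (fun y ↦ f (x, y)) volume c x)
    (houter : IntegrableOn (fun x ↦ ∫ y in c..x, ‖f (x, y)‖) (Ioc c d)) :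
    IntegrableOn f (lowerTriangle c d) := by
  refine (integrableOn_prod_iff (measurableSet_lowerTriangle c d) hf).2
    ⟨.of_forall fun x ↦ ?_, ?_⟩
  · by_cases hx : x ∈ Ioc c d
    · rw [prodMk_preimage_lowerTriangle_of_mem hx]
      exact (intervalIntegrable_iff_integrableOn_Ioo_of_le hx.1.le).1 (hinner x hx)
    · simp only [prodMk_preimage_lowerTriangle_of_notMem hx, integrableOn_empty]
  · rw [setIntegral_prodMk_preimage_lowerTriangle fun x y ↦ ‖f (x, y)‖]
    exact houter.integrable_indicator measurableSet_Ioc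

lemma setIntegral_lowerTriangle [NormedSpace ℝ E] (hcd : c ≤ d)
    (hf : IntegrableOn f (lowerTriangle c d)) :
    ∫ z in lowerTriangle c d, f z = ∫ x in c..d, ∫ y in c..x, f (x, y) := by
  rw [Measure.volume_eq_prod, setIntegral_prod_eq_integral_preimage
      (measurableSet_lowerTriangle c d) hf,
    setIntegral_prodMk_preimage_lowerTriangle fun x y ↦ f (x, y),
    integral_indicator measurableSet_Ioc, intervalIntegral.integral_of_le hcd]

lemma Ioc_prod_Ioc_ae_eq_lowerTriangle_union_swap (c d : ℝ) :
    Ioc c d ×ˢ Ioc c d =ᵐ[volume]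
      (lowerTriangle c d ∪ Prod.swap ⁻¹' lowerTriangle c d : Set (ℝ × ℝ)) := by
  have hoff : ∀ᵐ z : ℝ × ℝ, z ∉ diagonal ℝ :=
    measure_eq_zero_iff_ae_notMem.1 (measure_prod_diagonal volume volume)
  filter_upwards [hoff] with z hz
  have hne : z.1 ≠ z.2 := hz
  apply propext
  change z ∈ Ioc c d ×ˢ Ioc c d ↔ z ∈ lowerTriangle c d ∪ Prod.swap ⁻¹' lowerTriangle c d
  simp only [lowerTriangle, mem_prod, mem_Ioc, mem_union, mem_preimage, mem_ofPred_eq,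
    Prod.fst_swap, Prod.snd_swap]
  grind

lemma disjoint_lowerTriangle_swap (c d : ℝ) :
    Disjoint (lowerTriangle c d) (Prod.swap ⁻¹' lowerTriangle c d) :=
  disjoint_left.2 fun _ hz hz' ↦ hz.2.1.asymm hz'.2.1

lemma integrableOn_Ioc_prod_Ioc_iff :
    IntegrableOn f (Ioc c d ×ˢ Ioc c d) ↔
      IntegrableOn f (lowerTriangle c d) ∧ IntegrableOn (f ∘ Prod.swap) (lowerTriangle c d) := by
  rw [integrableOn_congr_set_ae (Ioc_prod_Ioc_ae_eq_lowerTriangle_union_swap c d),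
    integrableOn_union, Measure.volume_eq_prod, integrableOn_preimage_swap_iff]

lemma setIntegral_Ioc_prod_Ioc [NormedSpace ℝ E] (hf : IntegrableOn f (Ioc c d ×ˢ Ioc c d)) :
    ∫ z in Ioc c d ×ˢ Ioc c d, f z =
      (∫ z in lowerTriangle c d, f z) + ∫ z in lowerTriangle c d, (f ∘ Prod.swap) z := by
  obtain ⟨hlow, hup⟩ := integrableOn_Ioc_prod_Ioc_iff.1 hf
  rw [setIntegral_congr_set (Ioc_prod_Ioc_ae_eq_lowerTriangle_union_swap c d),
    setIntegral_union (disjoint_lowerTriangle_swap c d)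
      (measurable_swap (measurableSet_lowerTriangle c d)) hlow
      (integrableOn_preimage_swap_iff.2 hup),
    Measure.volume_eq_prod, setIntegral_preimage_swap]

end LowerTriangle

section BetaIntegral

variable {a b t : ℝ}

lemma integral_rpow_mul_sub_rpow (ha : 0 < a) (hb : 0 < b) (ht : 0 < t) :
    ∫ s in 0..t, s ^ (a - 1) * (t - s) ^ (b - 1) = t ^ (a + b - 1) * beta a b := by
  have hcast : ∫ s in 0..t, (s : ℂ) ^ ((a : ℂ) - 1) * ((t : ℂ) - s) ^ ((b : ℂ) - 1) =
      ((∫ s in 0..t, s ^ (a - 1) * (t - s) ^ (b - 1) : ℝ) : ℂ) := by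
    rw [← intervalIntegral.integral_ofReal]
    refine intervalIntegral.integral_congr fun s hs ↦ ?_
    rw [uIcc_of_le ht.le] at hs
    push_cast [Complex.ofReal_cpow hs.1, Complex.ofReal_cpow (sub_nonneg.2 hs.2)]
    rfl
  have hpow : (t : ℂ) ^ ((a : ℂ) + b - 1) = ((t ^ (a + b - 1) : ℝ) : ℂ) := by
    push_cast [Complex.ofReal_cpow ht.le]
    rfl
  have hscaled := Complex.betaIntegral_scaled a b ht
  rw [hcast, hpow] at hscaled
  simpa [beta_eq_betaIntegralReal a b ha hb] using congrArg Complex.re hscaled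

lemma intervalIntegrable_rpow_mul_sub_rpow (ha : 0 < a) (hb : 0 < b) (ht : 0 < t) :
    IntervalIntegrable (fun s ↦ s ^ (a - 1) * (t - s) ^ (b - 1)) volume 0 t := by
  apply intervalIntegral.intervalIntegrable_of_integral_ne_zero
  rw [integral_rpow_mul_sub_rpow ha hb ht]
  exact (mul_pos (Real.rpow_pos_of_pos ht _) (beta_pos ha hb)).ne'

end BetaIntegral

/-- The kernel `t ^ (a - 1) * s ^ (b - 1) * |t - s| ^ p` at `z = (t, s)`. The shifts by one are
those of the Beta integral; reflection in the diagonal exchanges `a` and `b`. -/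
noncomputable def absSubKernel (a b p : ℝ) (z : ℝ × ℝ) : ℝ :=
  z.1 ^ (a - 1) * z.2 ^ (b - 1) * |z.1 - z.2| ^ p

section AbsSubKernel

variable {a b p t T : ℝ}

lemma absSubKernel_comp_swap (a b p : ℝ) :
    absSubKernel a b p ∘ Prod.swap = absSubKernel b a p := by
  ext z
  simp only [absSubKernel, Function.comp_apply, Prod.fst_swap, Prod.snd_swap, abs_sub_comm z.2 z.1]
  ring

lemma measurable_absSubKernel (a b p : ℝ) : Measurable (absSubKernel a b p) := by
  unfold absSubKernel
  fun_prop

lemma absSubKernel_of_le {s : ℝ} (hst : s ≤ t) :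
    absSubKernel a b p (t, s) = t ^ (a - 1) * (s ^ (b - 1) * (t - s) ^ (p + 1 - 1)) := by
  simp only [absSubKernel, abs_of_nonneg (sub_nonneg.2 hst), add_sub_cancel_right, mul_assoc]

lemma absSubKernel_nonneg {z : ℝ × ℝ} (h₁ : 0 ≤ z.1) (h₂ : 0 ≤ z.2) : 0 ≤ absSubKernel a b p z := by
  unfold absSubKernel
  positivity

lemma intervalIntegrable_absSubKernel (hb : 0 < b) (hp : -1 < p) (ht : 0 < t) :
    IntervalIntegrable (fun s ↦ absSubKernel a b p (t, s)) volume 0 t := by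
  refine ((intervalIntegrable_rpow_mul_sub_rpow hb (neg_lt_iff_pos_add.1 hp) ht).const_mul
    (t ^ (a - 1))).congr fun s hs ↦ ?_
  rw [uIoc_of_le ht.le] at hs
  exact (absSubKernel_of_le hs.2).symm

lemma integral_absSubKernel (hb : 0 < b) (hp : -1 < p) (ht : 0 < t) :
    ∫ s in 0..t, absSubKernel a b p (t, s) = t ^ (a + b + p - 1) * beta b (p + 1) := by
  calc ∫ s in 0..t, absSubKernel a b p (t, s)
      = ∫ s in 0..t, t ^ (a - 1) * (s ^ (b - 1) * (t - s) ^ (p + 1 - 1)) := by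
        refine intervalIntegral.integral_congr fun s hs ↦ absSubKernel_of_le ?_
        rw [uIcc_of_le ht.le] at hs
        exact hs.2
    _ = t ^ (a - 1) * (t ^ (b + (p + 1) - 1) * beta b (p + 1)) := by
        rw [intervalIntegral.integral_const_mul,
          integral_rpow_mul_sub_rpow hb (neg_lt_iff_pos_add.1 hp) ht]
    _ = t ^ (a + b + p - 1) * beta b (p + 1) := by
        rw [← mul_assoc, ← Real.rpow_add ht]
        ring_nf

lemma integrableOn_lowerTriangle_absSubKernel (hb : 0 < b) (hp : -1 < p) (habp : 0 < a + b + p) :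
    IntegrableOn (absSubKernel a b p) (lowerTriangle 0 T) := by
  refine integrableOn_lowerTriangle (measurable_absSubKernel a b p).aestronglyMeasurable
    (fun t ht ↦ intervalIntegrable_absSubKernel hb hp ht.1) ?_
  have hpow : IntegrableOn (fun t : ℝ ↦ t ^ (a + b + p - 1) * beta b (p + 1)) (Ioc 0 T) :=
    ((intervalIntegral.intervalIntegrable_rpow' (by linarith)).mul_const _).1
  refine hpow.congr_fun (fun t ht ↦ ?_) measurableSet_Ioc
  refine (integral_absSubKernel hb hp ht.1).symm.trans ?_
  refine intervalIntegral.integral_congr fun s hs ↦ ?_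
  rw [uIcc_of_le ht.1.le] at hs
  exact (Real.norm_of_nonneg (absSubKernel_nonneg ht.1.le hs.1)).symm

lemma setIntegral_lowerTriangle_absSubKernel (hb : 0 < b) (hp : -1 < p) (habp : 0 < a + b + p)
    (hT : 0 ≤ T) :
    ∫ z in lowerTriangle 0 T, absSubKernel a b p z =
      T ^ (a + b + p) / (a + b + p) * beta b (p + 1) := by
  calc ∫ z in lowerTriangle 0 T, absSubKernel a b p z
      = ∫ t in 0..T, ∫ s in 0..t, absSubKernel a b p (t, s) :=
        setIntegral_lowerTriangle hT (integrableOn_lowerTriangle_absSubKernel hb hp habp)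
    _ = ∫ t in 0..T, t ^ (a + b + p - 1) * beta b (p + 1) := by
        refine intervalIntegral.integral_congr_uIoo fun t ht ↦ integral_absSubKernel hb hp ?_
        rw [uIoo_of_le hT] at ht
        exact ht.1
    _ = T ^ (a + b + p) / (a + b + p) * beta b (p + 1) := by
        rw [intervalIntegral.integral_mul_const, integral_rpow (Or.inl (by linarith)),
          sub_add_cancel, Real.zero_rpow habp.ne', sub_zero]

lemma integrableOn_Ioc_prod_Ioc_absSubKernel (ha : 0 < a) (hb : 0 < b) (hp : -1 < p)
    (habp : 0 < a + b + p) : IntegrableOn (absSubKernel a b p) (Ioc 0 T ×ˢ Ioc 0 T) := by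
  refine integrableOn_Ioc_prod_Ioc_iff.2 ⟨integrableOn_lowerTriangle_absSubKernel hb hp habp, ?_⟩
  rw [absSubKernel_comp_swap]
  exact integrableOn_lowerTriangle_absSubKernel ha hp (by linarith)

theorem integral_integral_absSubKernel (ha : 0 < a) (hb : 0 < b) (hp : -1 < p)
    (habp : 0 < a + b + p) (hT : 0 ≤ T) :
    ∫ t in 0..T, ∫ s in 0..T, absSubKernel a b p (t, s) =
      T ^ (a + b + p) / (a + b + p) * (beta a (p + 1) + beta b (p + 1)) := by
  have hint : IntegrableOn (absSubKernel a b p) (Ioc 0 T ×ˢ Ioc 0 T) :=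
    integrableOn_Ioc_prod_Ioc_absSubKernel ha hb hp habp
  calc ∫ t in 0..T, ∫ s in 0..T, absSubKernel a b p (t, s)
      = ∫ z in Ioc 0 T ×ˢ Ioc 0 T, absSubKernel a b p z := by
        simp only [intervalIntegral.integral_of_le hT]
        exact (setIntegral_prod _ hint).symm
    _ = (∫ z in lowerTriangle 0 T, absSubKernel a b p z) +
          ∫ z in lowerTriangle 0 T, absSubKernel b a p z := by
        rw [setIntegral_Ioc_prod_Ioc hint, absSubKernel_comp_swap]
    _ = T ^ (a + b + p) / (a + b + p) * (beta a (p + 1) + beta b (p + 1)) := by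
        rw [setIntegral_lowerTriangle_absSubKernel hb hp habp hT,
          setIntegral_lowerTriangle_absSubKernel ha hp (by linarith) hT, add_comm b a]
        ring

end AbsSubKernel

theorem stmt6_general {H a b T : ℝ} (hH : -(1 / 2) < H) (ha : 0 < a) (hb : 0 < b)
    (habH : 0 < a + b + 2 * H) (hT : 0 ≤ T) :
    (∫ t in (0:ℝ)..T, ∫ s in (0:ℝ)..T, t ^ (a - 1) * s ^ (b - 1) * |t - s| ^ (2 * H))
      = T ^ (a + b + 2 * H) / ((a + b) / 2 + H)
          * ((Real.Gamma (2 * H + 1) * Real.Gamma a / Real.Gamma (a + 2 * H + 1)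
            + Real.Gamma (2 * H + 1) * Real.Gamma b / Real.Gamma (b + 2 * H + 1)) / 2) := by
  have hbeta (x : ℝ) : beta x (2 * H + 1) =
      Real.Gamma (2 * H + 1) * Real.Gamma x / Real.Gamma (x + 2 * H + 1) := by
    rw [beta, mul_comm, add_assoc]
  have hden : (a + b) / 2 + H = (a + b + 2 * H) / 2 := by ring
  have hkernel := integral_integral_absSubKernel ha hb (by linarith : -1 < 2 * H) habH hT
  simp only [absSubKernel, hbeta] at hkernel
  rw [hkernel, div_mul_eq_mul_div, hden, div_mul_div_comm, div_mul_cancel₀ _ two_ne_zero]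

/-- For `H ∈ (0,1)` and an integer `n ≥ 1`,
`∫₀¹∫₀¹ t^{n−1}s^{n−1}|t−s|^{2H} ds dt = (1/(n+H))·Γ(2H+1)Γ(n)/Γ(n+2H+1)`. -/
theorem stmt6 (H : ℝ) (hH : H ∈ Set.Ioo (0:ℝ) 1) (n : ℕ) (hn : 1 ≤ n) :
    (∫ t in (0:ℝ)..1, ∫ s in (0:ℝ)..1, t ^ (n - 1) * s ^ (n - 1) * |t - s| ^ (2 * H))
      = (1 / ((n:ℝ) + H))
          * (Real.Gamma (2 * H + 1) * Real.Gamma (n:ℝ) / Real.Gamma ((n:ℝ) + 2 * H + 1)) := by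
  have hn₀ : (0 : ℝ) < n := Nat.cast_pos.2 hn
  simpa [← Nat.cast_pred hn] using
    stmt6_general (by linarith [hH.1]) hn₀ hn₀ (by linarith [hH.1]) zero_le_one
end

section
/- Let H ∈ (0, 3/4). There exists a constant C_H depending only on H such that for every integer n ≥ 1, Σ_{j=1}^n Σ_{k=1}^n β_{j,k}² ≤ C_H · n^{1−4H}. -/
/-- The fBm autocorrelation sequence `ρ_H(k) = (1/2)(|k+1|^{2H} − 2|k|^{2H} + |k−1|^{2H})`. -/
noncomputable def rhoH (H : ℝ) (k : ℤ) : ℝ :=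
  (1/2) * (|(k:ℝ) + 1| ^ (2 * H) - 2 * |(k:ℝ)| ^ (2 * H) + |(k:ℝ) - 1| ^ (2 * H))

/-!
The number `ρ_H(k)` is half a second difference of `x ↦ |x|^{2H}`, so two applications of the mean
value theorem give `|ρ_H(k)| = O(|k|^{2H-2})`. The square `ρ_H(k)²` is then `O(|k|^{4H-4})`, which
is summable over `ℤ` because `4H - 4 < -1`. Each row of the Toeplitz matrix `ρ_H(j-k)²` therefore
sums to at most `∑ ρ_H²`; the `n` rows together with the scaling factor `n^{-4H}` give
`n^{1-4H} ∑ ρ_H²`.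
-/

open Set

theorem exists_second_difference_eq_sq_mul {f f' f'' : ℝ → ℝ} {x h : ℝ} (hh : 0 < h)
    (hfc : ContinuousOn f (Icc (x - h) (x + h)))
    (hf : ∀ y ∈ Ioo (x - h) (x + h), HasDerivAt f (f' y) y)
    (hf' : ∀ y ∈ Ioo (x - h) (x + h), HasDerivAt f' (f'' y) y) :
    ∃ y ∈ Ioo (x - h) (x + h), f (x + h) - 2 * f x + f (x - h) = h ^ 2 * f'' y := by
  obtain ⟨c, ⟨hxc, hcx⟩, hc⟩ :
      ∃ c ∈ Ioo (x - h) x, (f (x + h) - f x) - (f (x - h + h) - f (x - h)) =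
        (f' (c + h) - f' c) * (x - (x - h)) := by
    obtain ⟨c, hcmem, hc⟩ := exists_hasDerivAt_eq_slope (fun y ↦ f (y + h) - f y)
      (fun y ↦ f' (y + h) - f' y) (sub_lt_self x hh)
      ((hfc.comp (by fun_prop) fun y hy ↦ ⟨by linarith [hy.1], by linarith [hy.2]⟩).sub
        (hfc.mono (Icc_subset_Icc_right (by linarith))))
      fun y ⟨hxy, hyx⟩ ↦ ((hf (y + h) ⟨by linarith, by linarith⟩).comp_add_const y h).sub
        (hf y ⟨hxy, by linarith⟩)
    exact ⟨c, hcmem, ((eq_div_iff (by linarith)).1 hc).symm⟩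
  have hsub : Icc c (c + h) ⊆ Ioo (x - h) (x + h) := Icc_subset_Ioo hxc (by linarith)
  obtain ⟨y, hymem, hy⟩ := exists_hasDerivAt_eq_slope f' f'' (lt_add_of_pos_right c hh)
    (fun z hz ↦ (hf' z (hsub hz)).continuousAt.continuousWithinAt)
    fun z hz ↦ hf' z (hsub (Ioo_subset_Icc_self hz))
  refine ⟨y, hsub (Ioo_subset_Icc_self hymem), ?_⟩
  rw [eq_div_iff (by linarith)] at hy
  rw [sub_add_cancel] at hc
  linear_combination hc - h * hy

theorem abs_rpow_second_difference_le {p x h : ℝ} (hp : p ≤ 2) (hh : 0 < h) (hhx : h < x) :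
    |(x + h) ^ p - 2 * x ^ p + (x - h) ^ p| ≤ h ^ 2 * (|p * (p - 1)| * (x - h) ^ (p - 2)) := by
  have hxh : 0 < x - h := sub_pos.2 hhx
  obtain ⟨y, ⟨hxy, -⟩, hy⟩ := exists_second_difference_eq_sq_mul (x := x)
    (f := fun y ↦ y ^ p) (f' := fun y ↦ p * y ^ (p - 1))
    (f'' := fun y ↦ p * ((p - 1) * y ^ (p - 1 - 1))) hh
    (continuousOn_id.rpow_const fun y hy ↦ .inl (hxh.trans_le hy.1).ne')
    (fun y hy ↦ Real.hasDerivAt_rpow_const (.inl (hxh.trans hy.1).ne'))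
    (fun y hy ↦ (Real.hasDerivAt_rpow_const (.inl (hxh.trans hy.1).ne')).const_mul p)
  have hy0 : 0 < y := hxh.trans hxy
  calc |(x + h) ^ p - 2 * x ^ p + (x - h) ^ p|
      = h ^ 2 * (|p * (p - 1)| * y ^ (p - 2)) := by
        rw [hy, ← mul_assoc p, abs_mul, abs_mul, abs_sq, abs_of_pos (Real.rpow_pos_of_pos hy0 _),
          sub_sub, one_add_one_eq_two]
    _ ≤ h ^ 2 * (|p * (p - 1)| * (x - h) ^ (p - 2)) := by
        gcongr h ^ 2 * (|p * (p - 1)| * ?_)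
        exact Real.rpow_le_rpow_of_nonpos hxh hxy.le (sub_nonpos.2 hp)

theorem rhoH_zero {H : ℝ} (hH : H ≠ 0) : rhoH H 0 = 1 := by
  norm_num [rhoH, Real.zero_rpow, hH]

theorem rhoH_neg (H : ℝ) (k : ℤ) : rhoH H (-k) = rhoH H k := by
  have hadd : |-(k : ℝ) + 1| = |(k : ℝ) - 1| := by rw [neg_add_eq_sub, abs_sub_comm]
  have hsub : |-(k : ℝ) - 1| = |(k : ℝ) + 1| := by rw [← neg_add', abs_neg]
  simp only [rhoH, Int.cast_neg, hadd, hsub, abs_neg]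
  ring

theorem abs_rhoH_natCast_add_one_le {H : ℝ} (hH : H ≤ 1) {k : ℕ} (hk : 1 ≤ k) :
    |rhoH H (k + 1 : ℕ)| ≤ |H * (2 * H - 1)| * (k : ℝ) ^ (2 * H - 2) := by
  have hk0 : (0 : ℝ) < k := by exact_mod_cast hk
  have hdiff := abs_rpow_second_difference_le (p := 2 * H) (x := k + 1) (h := 1)
    (by linarith) one_pos (by linarith)
  rw [add_sub_cancel_right, one_pow, one_mul, mul_assoc 2 H, abs_mul 2, abs_two] at hdiff
  have hrho : rhoH H (k + 1 : ℕ) =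
      1 / 2 * (((k : ℝ) + 1 + 1) ^ (2 * H) - 2 * ((k : ℝ) + 1) ^ (2 * H) + (k : ℝ) ^ (2 * H)) := by
    rw [rhoH, Int.cast_natCast, Nat.cast_add_one, add_sub_cancel_right,
      abs_of_pos (by positivity), abs_of_pos (by positivity), abs_of_pos hk0]
  rw [hrho, abs_mul, abs_of_pos one_half_pos]
  linarith

theorem summable_rhoH_sq {H : ℝ} (hH : H < 3 / 4) : Summable fun k : ℤ ↦ rhoH H k ^ 2 := by
  have hnat : Summable fun k : ℕ ↦ rhoH H k ^ 2 := by
    rw [← summable_nat_add_iff 1]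
    have hpow : Summable fun k : ℕ ↦ |H * (2 * H - 1)| ^ 2 * (k : ℝ) ^ (4 * H - 4) :=
      (Real.summable_nat_rpow.2 (by linarith)).mul_left _
    refine hpow.of_norm_bounded_eventually_nat ?_
    filter_upwards [Filter.eventually_ge_atTop 1] with k hk
    calc ‖rhoH H (k + 1 : ℕ) ^ 2‖ = |rhoH H (k + 1 : ℕ)| ^ 2 := by rw [norm_pow, Real.norm_eq_abs]
      _ ≤ (|H * (2 * H - 1)| * (k : ℝ) ^ (2 * H - 2)) ^ 2 := by
        gcongr
        exact abs_rhoH_natCast_add_one_le (by linarith) hk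
      _ = |H * (2 * H - 1)| ^ 2 * (k : ℝ) ^ (4 * H - 4) := by
        rw [mul_pow, ← Real.rpow_mul_natCast k.cast_nonneg]
        ring_nf
  exact .of_nat_of_neg hnat (by simpa only [rhoH_neg] using hnat)

theorem sum_sum_sub_le_card_mul_tsum {G ι κ : Type*} [AddGroup G] {a : G → ℝ} (ha : Summable a)
    (ha0 : ∀ g, 0 ≤ a g) (u : ι → G) {v : κ → G} (hv : v.Injective) (s : Finset ι) (t : Finset κ) :
    ∑ j ∈ s, ∑ k ∈ t, a (u j - v k) ≤ s.card * ∑' g, a g := by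
  rw [← nsmul_eq_mul]
  refine Finset.sum_le_card_nsmul s _ _ fun j _ ↦ ?_
  have hinj : Function.Injective fun k ↦ u j - v k := sub_right_injective.comp hv
  calc ∑ k ∈ t, a (u j - v k) ≤ ∑' k, a (u j - v k) :=
        (ha.comp_injective hinj).sum_le_tsum t fun k _ ↦ ha0 _
    _ ≤ ∑' g, a g := tsum_comp_le_tsum_of_inj ha ha0 hinj

/-- Lemma 8 (d): for `H ∈ (0,3/4)` there is a constant `C_H` such that for all `n ≥ 1`,
`Σ_{j,k=1}^n β_{j,k}² ≤ C_H · n^{1−4H}`, where `β_{j,k} = n^{−2H} ρ_H(j−k)`. -/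
theorem stmt10 (H : ℝ) (hH : H ∈ Set.Ioo (0:ℝ) (3/4)) :
    ∃ C : ℝ, 0 < C ∧ ∀ n : ℕ, 1 ≤ n →
      (∑ j ∈ Finset.Icc 1 n, ∑ k ∈ Finset.Icc 1 n,
          ((n:ℝ) ^ (-(2 * H)) * rhoH H ((j:ℤ) - (k:ℤ))) ^ 2)
        ≤ C * (n:ℝ) ^ (1 - 4 * H) := by
  have hsum := summable_rhoH_sq hH.2
  refine ⟨∑' k, rhoH H k ^ 2, hsum.tsum_pos (fun _ ↦ sq_nonneg _) 0 ?_, fun n hn ↦ ?_⟩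
  · simp only [rhoH_zero hH.1.ne', one_pow, one_pos]
  have hn0 : (0 : ℝ) < n := by exact_mod_cast hn
  have hscale : ((n : ℝ) ^ (-(2 * H))) ^ 2 * n = (n : ℝ) ^ (1 - 4 * H) := by
    rw [← Real.rpow_mul_natCast hn0.le, ← Real.rpow_add_one hn0.ne']
    ring_nf
  have hrows := sum_sum_sub_le_card_mul_tsum hsum (fun _ ↦ sq_nonneg _) ((↑) : ℕ → ℤ)
    Nat.cast_injective (Finset.Icc 1 n) (Finset.Icc 1 n)
  rw [Nat.card_Icc, Nat.add_sub_cancel] at hrows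
  simp only [mul_pow, ← Finset.mul_sum]
  calc _ ≤ ((n : ℝ) ^ (-(2 * H))) ^ 2 * (n * ∑' k, rhoH H k ^ 2) := by gcongr
    _ = (∑' k, rhoH H k ^ 2) * (n : ℝ) ^ (1 - 4 * H) := by rw [← hscale]; ring
end
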